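/- arXiv:1611.02537 — 2 statements merged into one kernel-verified Lean document; each statement's English description precedes it below -/
import Mathlib

section
/- (Lemmas 3 and 4, soundness for positive constraints) Let P be a semi-positive Datalog program, J an interpretation, k ≥ 1, and J₀, J₁, …, J_k a k-step derivation family for (P,J). Then every ground atom p(v̄) ∈ J_k belongs to the model of P on the extensional part of J: p(v̄) ∈ ⟦P⟧_{inp(P,J)}. -/
set_option autoImplicit false

namespace Datalog

universe u v w

variable {Preds : Type u} {Vars : Type v} {Vals : Type w} {ar : Preds → ℕ}

/-- A term is a variable or a value. -/
inductive Term (Vars : Type v) (Vals : Type w) : Type (max v w) where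
  | var : Vars → Term Vars Vals
  | val : Vals → Term Vars Vals

/-- An atom `p(t̄)` over terms. -/
structure Atom (Preds : Type u) (Vars : Type v) (Vals : Type w) (ar : Preds → ℕ) :
    Type (max u v w) where
  pred : Preds
  args : Fin (ar pred) → Term Vars Vals

/-- A literal: a positive or a negated atom. -/
inductive Lit (Preds : Type u) (Vars : Type v) (Vals : Type w) (ar : Preds → ℕ) :
    Type (max u v w) where
  | pos : Atom Preds Vars Vals ar → Lit Preds Vars Vals ar
  | neg : Atom Preds Vars Vals ar → Lit Preds Vars Vals ar

def Lit.atom : Lit Preds Vars Vals ar → Atom Preds Vars Vals ar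
  | .pos a => a
  | .neg a => a

def Lit.pred (l : Lit Preds Vars Vals ar) : Preds := l.atom.pred

def Lit.isPos : Lit Preds Vars Vals ar → Prop
  | .pos _ => True
  | .neg _ => False

def Lit.isNeg : Lit Preds Vars Vals ar → Prop
  | .pos _ => False
  | .neg _ => True

/-- A ground atom `p(v̄)`. -/
structure GAtom (Preds : Type u) (Vals : Type w) (ar : Preds → ℕ) : Type (max u w) where
  pred : Preds
  args : Fin (ar pred) → Vals

/-- An interpretation is a set of ground atoms. -/
abbrev Interp (Preds : Type u) (Vals : Type w) (ar : Preds → ℕ) :=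
  Set (GAtom Preds Vals ar)

def Atom.hasVar (a : Atom Preds Vars Vals ar) (x : Vars) : Prop :=
  ∃ i, a.args i = Term.var x

/-- A Datalog rule `a ← l₁,…,lₘ`: every variable in the head occurs in the body. -/
structure Rule (Preds : Type u) (Vars : Type v) (Vals : Type w) (ar : Preds → ℕ) :
    Type (max u v w) where
  head : Atom Preds Vars Vals ar
  body : List (Lit Preds Vars Vals ar)
  safe : ∀ x : Vars, head.hasVar x → ∃ l ∈ body, l.atom.hasVar x

/-- A Datalog program: a finite set (list) of rules. -/
abbrev Program (Preds : Type u) (Vars : Type v) (Vals : Type w) (ar : Preds → ℕ) :=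
  List (Rule Preds Vars Vals ar)

/-- Applying a substitution to a term. -/
def substT (σ : Vars → Vals) : Term Vars Vals → Vals
  | .var x => σ x
  | .val v => v

/-- `σ(a)`: grounding an atom by a substitution. -/
def Atom.ground (a : Atom Preds Vars Vals ar) (σ : Vars → Vals) : GAtom Preds Vals ar :=
  ⟨a.pred, fun i => substT σ (a.args i)⟩

/-- `A ⊢ σ(l)`. -/
def holds (A : Interp Preds Vals ar) (σ : Vars → Vals) : Lit Preds Vars Vals ar → Prop
  | .pos a => a.ground σ ∈ A
  | .neg a => a.ground σ ∉ A

/-- The consequence operator `T_P`. -/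
def T (P : Program Preds Vars Vals ar) (A : Interp Preds Vals ar) : Interp Preds Vals ar :=
  A ∪ { g | ∃ r ∈ P, ∃ σ : Vars → Vals, (∀ l ∈ r.body, holds A σ l) ∧ r.head.ground σ = g }

/-- `T^i_{P,I}`: iterates of the consequence operator. -/
def iter (P : Program Preds Vars Vals ar) (I : Interp Preds Vals ar) :
    ℕ → Interp Preds Vals ar
  | 0 => I
  | n + 1 => T P (iter P I n)

/-- The model `⟦P⟧_I = ⋃_{i≥0} T^i_{P,I}`. -/
def model (P : Program Preds Vars Vals ar) (I : Interp Preds Vals ar) :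
    Interp Preds Vals ar :=
  ⋃ n, iter P I n

/-- `p` is extensional for `P`: it occurs in no rule head. -/
def isEDB (P : Program Preds Vars Vals ar) (p : Preds) : Prop :=
  ∀ r ∈ P, r.head.pred ≠ p

/-- `p` is intensional for `P`: not extensional. -/
def isIDB (P : Program Preds Vars Vals ar) (p : Preds) : Prop := ¬ isEDB P p

/-- `inp(P, J)`: the extensional part of `J`. -/
def inp (P : Program Preds Vars Vals ar) (J : Interp Preds Vals ar) :
    Interp Preds Vals ar :=
  { a ∈ J | isEDB P a.pred }

/-- An input for `P` contains only atoms over edb predicates. -/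
def isInput (P : Program Preds Vars Vals ar) (I : Interp Preds Vals ar) : Prop :=
  ∀ a ∈ I, isEDB P a.pred

/-- `P` is semi-positive: negative body literals use only edb predicates. -/
def semiPositive (P : Program Preds Vars Vals ar) : Prop :=
  ∀ r ∈ P, ∀ a : Atom Preds Vars Vals ar, Lit.neg a ∈ r.body → isEDB P a.pred

/-- `J` is rule-closed for `P`. -/
def ruleClosed (P : Program Preds Vars Vals ar) (J : Interp Preds Vals ar) : Prop :=
  ∀ r ∈ P, ∀ σ : Vars → Vals, (∀ l ∈ r.body, holds J σ l) → r.head.ground σ ∈ J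

/-- Condition on a body literal in a k-step derivation family: a positive literal over an
idb predicate must have been derived at the previous level; otherwise (a literal over an
edb predicate) it must hold w.r.t. `J`. -/
def litStep (P : Program Preds Vars Vals ar) (J Fprev : Interp Preds Vals ar)
    (σ : Vars → Vals) : Lit Preds Vars Vals ar → Prop
  | .pos a => (isIDB P a.pred ∧ a.ground σ ∈ Fprev) ∨ (isEDB P a.pred ∧ a.ground σ ∈ J)
  | .neg a => a.ground σ ∉ J

/-- `F 0, F 1, …, F k` is a k-step derivation family for `(P, J)`. -/
def derivFamily (P : Program Preds Vars Vals ar) (J : Interp Preds Vals ar) (k : ℕ)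
    (F : ℕ → Interp Preds Vals ar) : Prop :=
  (∀ i ≤ k, ∀ a ∈ F i, isIDB P a.pred) ∧
  F 0 = ∅ ∧
  (∀ i, 1 ≤ i → i ≤ k → ∀ g : GAtom Preds Vals ar, isIDB P g.pred →
    (g ∈ F i ↔ ∃ r ∈ P, ∃ σ : Vars → Vals,
      r.head.ground σ = g ∧ ∀ l ∈ r.body, litStep P J (F (i - 1)) σ l))

/-- Monotone ground formulas: ground literals combined by ∧ and ∨. -/
inductive GForm (Preds : Type u) (Vals : Type w) (ar : Preds → ℕ) : Type (max u w) where
  | pos : GAtom Preds Vals ar → GForm Preds Vals ar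
  | neg : GAtom Preds Vals ar → GForm Preds Vals ar
  | conj : GForm Preds Vals ar → GForm Preds Vals ar → GForm Preds Vals ar
  | disj : GForm Preds Vals ar → GForm Preds Vals ar → GForm Preds Vals ar

/-- `A ⊨ φ`. -/
def sat (A : Interp Preds Vals ar) : GForm Preds Vals ar → Prop
  | .pos a => a ∈ A
  | .neg a => a ∉ A
  | .conj φ ψ => sat A φ ∧ sat A ψ
  | .disj φ ψ => sat A φ ∨ sat A ψ

/-- The k-rewriting of `φ` holds (w.r.t. `J` and the top level `Fk` of a derivation
family): positive idb literals are read in `Fk`, positive edb literals in `J`, and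
negative literals as non-membership in `J`. -/
def kRewrite (P : Program Preds Vars Vals ar) (J Fk : Interp Preds Vals ar) :
    GForm Preds Vals ar → Prop
  | .pos a => (isIDB P a.pred ∧ a ∈ Fk) ∨ (isEDB P a.pred ∧ a ∈ J)
  | .neg a => a ∉ J
  | .conj φ ψ => kRewrite P J Fk φ ∧ kRewrite P J Fk ψ
  | .disj φ ψ => kRewrite P J Fk φ ∨ kRewrite P J Fk ψ

/-- A positive property of interpretations. -/
def PositiveProp (φ : Interp Preds Vals ar → Prop) : Prop :=
  ∀ A A' : Interp Preds Vals ar, φ A → A ⊆ A' → φ A'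

/-- A negative property of interpretations. -/
def NegativeProp (φ : Interp Preds Vals ar → Prop) : Prop :=
  ∀ A A' : Interp Preds Vals ar, φ A → A' ⊆ A → φ A'

/-- `φ` contains only positive literals. -/
def onlyPos : GForm Preds Vals ar → Prop
  | .pos _ => True
  | .neg _ => False
  | .conj φ ψ => onlyPos φ ∧ onlyPos ψ
  | .disj φ ψ => onlyPos φ ∧ onlyPos ψ

/-- `φ` contains only negative literals. -/
def onlyNeg : GForm Preds Vals ar → Prop
  | .pos _ => False
  | .neg _ => True
  | .conj φ ψ => onlyNeg φ ∧ onlyNeg ψ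
  | .disj φ ψ => onlyNeg φ ∧ onlyNeg ψ

/-- The predicate `p` occurs in the program `P` (in a head or a body). -/
def occursIn (P : Program Preds Vars Vals ar) (p : Preds) : Prop :=
  ∃ r ∈ P, r.head.pred = p ∨ ∃ l ∈ r.body, l.pred = p

/-- All literals of `φ` use predicates occurring in `P`. -/
def formPredsIn (P : Program Preds Vars Vals ar) : GForm Preds Vals ar → Prop
  | .pos a => occursIn P a.pred
  | .neg a => occursIn P a.pred
  | .conj φ ψ => formPredsIn P φ ∧ formPredsIn P ψ
  | .disj φ ψ => formPredsIn P φ ∧ formPredsIn P ψ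

/-- `Ps 1, …, Ps n` is a stratification: whenever a predicate occurs in a positive
(resp. negative) body literal of a rule in stratum `i`, every rule with that head
predicate lies in a stratum `j ≤ i` (resp. `j < i`). -/
def stratifiedWith (Ps : ℕ → Program Preds Vars Vals ar) (n : ℕ) : Prop :=
  ∀ i, 1 ≤ i → i ≤ n → ∀ r ∈ Ps i, ∀ l ∈ r.body,
    ∀ j, 1 ≤ j → j ≤ n → ∀ r' ∈ Ps j, r'.head.pred = l.pred →
      (l.isPos → j ≤ i) ∧ (l.isNeg → j < i)

/-- The models `M₀ = I`, `Mᵢ = ⟦Pᵢ⟧_{M_{i-1}}` of the strata. -/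
def Msets (Ps : ℕ → Program Preds Vars Vals ar) (I : Interp Preds Vals ar) :
    ℕ → Interp Preds Vals ar
  | 0 => I
  | i + 1 => model (Ps (i + 1)) (Msets Ps I i)

section

variable {P : Program Preds Vars Vals ar} {I J A B : Interp Preds Vals ar}

theorem iter_subset_model (P : Program Preds Vars Vals ar) (I : Interp Preds Vals ar) (n : ℕ) :
    iter P I n ⊆ model P I :=
  Set.subset_iUnion (iter P I) n

theorem mem_T_iff_of_isEDB {g : GAtom Preds Vals ar} (hg : isEDB P g.pred) :
    g ∈ T P A ↔ g ∈ A := by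
  refine ⟨?_, fun hgA => Or.inl hgA⟩
  rintro (hgA | ⟨r, hr, σ, -, rfl⟩)
  · exact hgA
  · exact absurd rfl (hg r hr)

theorem mem_iter_iff_of_isEDB {g : GAtom Preds Vals ar} (hg : isEDB P g.pred) (n : ℕ) :
    g ∈ iter P I n ↔ g ∈ I := by
  induction n with
  | zero => exact Iff.rfl
  | succ n ih => exact (mem_T_iff_of_isEDB hg).trans ih

theorem mem_inp_iff_of_isEDB {g : GAtom Preds Vals ar} (hg : isEDB P g.pred) :
    g ∈ inp P J ↔ g ∈ J :=
  and_iff_left hg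

/-- Enlarging `B` to `A` is harmless for negative literals because semi-positivity makes them
extensional, and there `A` agrees with `J`. -/
theorem holds_of_litStep (hP : semiPositive P) (hBA : B ⊆ A)
    (hAJ : ∀ g : GAtom Preds Vals ar, isEDB P g.pred → (g ∈ A ↔ g ∈ J))
    {r : Rule Preds Vars Vals ar} (hr : r ∈ P) {l : Lit Preds Vars Vals ar} (hl : l ∈ r.body)
    {σ : Vars → Vals} (hstep : litStep P J B σ l) : holds A σ l := by
  cases l with
  | pos a =>
    rcases hstep with ⟨-, haB⟩ | ⟨hedb, haJ⟩
    · exact hBA haB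
    · exact (hAJ (a.ground σ) hedb).2 haJ
  | neg a => exact fun haA => hstep ((hAJ (a.ground σ) (hP r hr a hl)).1 haA)

theorem derivFamily.exists_rule_of_mem_succ {k i : ℕ} {F : ℕ → Interp Preds Vals ar}
    (hF : derivFamily P J k F) (hi : i + 1 ≤ k) {g : GAtom Preds Vals ar} (hg : g ∈ F (i + 1)) :
    ∃ r ∈ P, ∃ σ : Vars → Vals,
      r.head.ground σ = g ∧ ∀ l ∈ r.body, litStep P J (F i) σ l := by
  obtain ⟨hidb, -, hlevel⟩ := hF
  exact (hlevel (i + 1) (Nat.le_add_left 1 i) hi g (hidb (i + 1) hi g hg)).1 hg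

theorem derivFamily.subset_iter_inp {k i : ℕ} {F : ℕ → Interp Preds Vals ar}
    (hF : derivFamily P J k F) (hP : semiPositive P) (hi : i ≤ k) :
    F i ⊆ iter P (inp P J) i := by
  induction i with
  | zero =>
    rw [hF.2.1]
    exact Set.empty_subset _
  | succ i ih =>
    intro g hg
    obtain ⟨r, hr, σ, hhead, hbody⟩ := hF.exists_rule_of_mem_succ hi hg
    have agree_on_edb (g : GAtom Preds Vals ar) (hg : isEDB P g.pred) :
        g ∈ iter P (inp P J) i ↔ g ∈ J :=
      (mem_iter_iff_of_isEDB hg i).trans (mem_inp_iff_of_isEDB hg)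
    have body_holds : ∀ l ∈ r.body, holds (iter P (inp P J) i) σ l := fun l hl =>
      holds_of_litStep hP (ih (Nat.le_of_succ_le hi)) agree_on_edb hr hl (hbody l hl)
    exact Or.inr ⟨r, hr, σ, body_holds, hhead⟩

end

/-- Lemmas 3 and 4, soundness for positive constraints: every atom in the
top level `F k` of a k-step derivation family belongs to `⟦P⟧_{inp(P,J)}`. -/
theorem statement8 (P : Program Preds Vars Vals ar) (hP : semiPositive P)
    (J : Interp Preds Vals ar) (k : ℕ) (hk : 1 ≤ k)
    (F : ℕ → Interp Preds Vals ar) (hF : derivFamily P J k F) :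
    ∀ g ∈ F k, g ∈ model P (inp P J) := by
  intro g hg
  have hg_iter : g ∈ iter P (inp P J) k := hF.subset_iter_inp hP le_rfl hg
  exact iter_subset_model P (inp P J) k hg_iter

end Datalog
end

section
/- (Completeness of bounded unrolling) Let P be a semi-positive Datalog program, I an input for P, and k ≥ 1 such that T^k_{P,I} = ⟦P⟧_I. Set J = ⟦P⟧_I and, for 0 ≤ i ≤ k, Jᵢ = the set of atoms of T^i_{P,I} over idb predicates of P. Then: (i) J₀, J₁, …, J_k is a k-step derivation family for (P,J); (ii) J is rule-closed for P; (iii) inp(P,J) = I; and (iv) for every monotone ground formula φ with ⟦P⟧_I ⊨ φ, the k-rewriting of φ (with respect to J and J_k) holds. -/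
set_option autoImplicit false

namespace Datalog

universe u v w

variable {Preds : Type u} {Vars : Type v} {Vals : Type w} {ar : Preds → ℕ}

/-!
Rule heads are intensional, so no stage `T^i_{P,I}` changes the extensional part of the input. In a
semi-positive program negation is therefore evaluated on a fixed set of atoms, which makes rule
application monotone along the stages. Hence everything derived so far is derived again at the next
step, `T^{i+1}_{P,I} = I ∪ consequences P (T^i_{P,I})`, and this is exactly the recursion defining a
derivation family.
-/

/-- The ground heads of all rule instances whose bodies hold in `A`, so that
`T P A = A ∪ consequences P A`. Unlike `T P A`, this does not retain `A` itself. -/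
def consequences (P : Program Preds Vars Vals ar) (A : Interp Preds Vals ar) :
    Interp Preds Vals ar :=
  { g | ∃ r ∈ P, ∃ σ : Vars → Vals, (∀ l ∈ r.body, holds A σ l) ∧ r.head.ground σ = g }

/-- The intensional part of `A`, complementary to `inp P A`; the levels `Jᵢ` of the derivation
family are the intensional parts of the stages `iter P I i`. -/
def idbPart (P : Program Preds Vars Vals ar) (A : Interp Preds Vals ar) : Interp Preds Vals ar :=
  { a ∈ A | isIDB P a.pred }

section

variable {P : Program Preds Vars Vals ar} {A B I J : Interp Preds Vals ar} {g : GAtom Preds Vals ar}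

theorem isIDB_of_mem_consequences (hg : g ∈ consequences P A) : isIDB P g.pred := by
  obtain ⟨r, hr, σ, -, rfl⟩ := hg
  exact fun hedb => hedb r hr rfl

theorem mem_iff_mem_of_inp_eq (h : inp P A = inp P B) (hg : isEDB P g.pred) :
    g ∈ A ↔ g ∈ B := by
  have hmem : g ∈ inp P A ↔ g ∈ inp P B := by rw [h]
  simpa only [inp, Set.mem_sep_iff, hg, and_true] using hmem

theorem inp_T (P : Program Preds Vars Vals ar) (A : Interp Preds Vals ar) :
    inp P (T P A) = inp P A := by
  ext g
  constructor
  · rintro ⟨hA | hcons, hedb⟩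
    · exact ⟨hA, hedb⟩
    · exact absurd hedb (isIDB_of_mem_consequences hcons)
  · exact fun ⟨hA, hedb⟩ => ⟨Or.inl hA, hedb⟩

theorem inp_iter (P : Program Preds Vars Vals ar) (I : Interp Preds Vals ar) (n : ℕ) :
    inp P (iter P I n) = inp P I := by
  induction n with
  | zero => rfl
  | succ n ih => exact (inp_T P (iter P I n)).trans ih

theorem inp_model (P : Program Preds Vars Vals ar) (I : Interp Preds Vals ar) :
    inp P (model P I) = inp P I := by
  ext g
  constructor
  · rintro ⟨hmodel, hedb⟩
    obtain ⟨n, hn⟩ := Set.mem_iUnion.mp hmodel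
    exact ⟨(mem_iff_mem_of_inp_eq (inp_iter P I n) hedb).mp hn, hedb⟩
  · exact fun ⟨hI, hedb⟩ => ⟨Set.mem_iUnion.mpr ⟨0, hI⟩, hedb⟩

theorem inp_eq_self_of_isInput (hI : isInput P I) : inp P I = I :=
  Set.sep_eq_self_iff_mem_true.mpr hI

theorem idbPart_eq_empty_of_isInput (hI : isInput P I) : idbPart P I = ∅ :=
  Set.sep_eq_empty_iff_mem_false.mpr fun a ha => not_not_intro (hI a ha)

theorem consequences_mono (hP : semiPositive P) (hinp : inp P A = inp P B) (hAB : A ⊆ B) :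
    consequences P A ⊆ consequences P B := by
  rintro _ ⟨r, hr, σ, hbody, rfl⟩
  refine ⟨r, hr, σ, fun l hl => ?_, rfl⟩
  have hA := hbody l hl
  cases l with
  | pos a => exact hAB hA
  | neg a => exact fun hB => hA ((mem_iff_mem_of_inp_eq hinp (hP r hr a hl)).mpr hB)

theorem iter_succ_eq_union_consequences (hP : semiPositive P) (I : Interp Preds Vals ar) (n : ℕ) :
    iter P I (n + 1) = I ∪ consequences P (iter P I n) := by
  induction n with
  | zero => rfl
  | succ n ih =>
    have hmono : consequences P (iter P I n) ⊆ consequences P (iter P I (n + 1)) :=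
      consequences_mono hP (inp_T P (iter P I n)).symm Set.subset_union_left
    calc iter P I (n + 2)
        = iter P I (n + 1) ∪ consequences P (iter P I (n + 1)) := rfl
      _ = I ∪ (consequences P (iter P I n) ∪ consequences P (iter P I (n + 1))) := by
          rw [← Set.union_assoc, ← ih]
      _ = I ∪ consequences P (iter P I (n + 1)) := by
          rw [Set.union_eq_self_of_subset_left hmono]

theorem idbPart_iter_succ (hP : semiPositive P) (hI : isInput P I) (n : ℕ) :
    idbPart P (iter P I (n + 1)) = consequences P (iter P I n) := by
  rw [iter_succ_eq_union_consequences hP]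
  ext g
  constructor
  · rintro ⟨hinput | hcons, hidb⟩
    · exact absurd (hI g hinput) hidb
    · exact hcons
  · exact fun hcons => ⟨Or.inr hcons, isIDB_of_mem_consequences hcons⟩

theorem mem_iff_mem_idbPart_or_edb_mem (hinp : inp P A = inp P J) :
    g ∈ A ↔ (isIDB P g.pred ∧ g ∈ idbPart P A) ∨ (isEDB P g.pred ∧ g ∈ J) := by
  by_cases hedb : isEDB P g.pred
  · simp only [isIDB, hedb, not_true_eq_false, false_and, true_and, false_or,
      mem_iff_mem_of_inp_eq hinp hedb]
  · simp only [idbPart, isIDB, hedb, Set.mem_sep_iff, not_false_eq_true, true_and, and_true,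
      false_and, or_false]

theorem litStep_idbPart_iff_holds (hP : semiPositive P) (hinp : inp P A = inp P J)
    {r : Rule Preds Vars Vals ar} (hr : r ∈ P) {l : Lit Preds Vars Vals ar} (hl : l ∈ r.body)
    (σ : Vars → Vals) : litStep P J (idbPart P A) σ l ↔ holds A σ l := by
  cases l with
  | pos a => exact (mem_iff_mem_idbPart_or_edb_mem (g := a.ground σ) hinp).symm
  | neg a => exact not_congr (mem_iff_mem_of_inp_eq hinp (hP r hr a hl)).symm

theorem mem_consequences_iff_litStep (hP : semiPositive P) (hinp : inp P A = inp P J) :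
    g ∈ consequences P A ↔ ∃ r ∈ P, ∃ σ : Vars → Vals,
      r.head.ground σ = g ∧ ∀ l ∈ r.body, litStep P J (idbPart P A) σ l := by
  constructor
  · rintro ⟨r, hr, σ, hbody, hhead⟩
    exact ⟨r, hr, σ, hhead, fun l hl =>
      (litStep_idbPart_iff_holds hP hinp hr hl σ).mpr (hbody l hl)⟩
  · rintro ⟨r, hr, σ, hhead, hbody⟩
    exact ⟨r, hr, σ, fun l hl =>
      (litStep_idbPart_iff_holds hP hinp hr hl σ).mp (hbody l hl), hhead⟩

theorem derivFamily_idbPart_iter (hP : semiPositive P) (hI : isInput P I) (k : ℕ) :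
    derivFamily P (model P I) k (fun i => idbPart P (iter P I i)) := by
  refine ⟨fun i _ a ha => ha.2, idbPart_eq_empty_of_isInput hI, fun i hi _ g _ => ?_⟩
  obtain ⟨n, rfl⟩ := Nat.exists_eq_add_of_le' hi
  have hinp : inp P (iter P I n) = inp P (model P I) :=
    (inp_iter P I n).trans (inp_model P I).symm
  beta_reduce
  rw [idbPart_iter_succ hP hI, Nat.add_sub_cancel]
  exact mem_consequences_iff_litStep hP hinp

theorem ruleClosed_iff_consequences_subset : ruleClosed P J ↔ consequences P J ⊆ J := by
  constructor
  · rintro hJ _ ⟨r, hr, σ, hbody, rfl⟩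
    exact hJ r hr σ hbody
  · exact fun hJ r hr σ hbody => hJ ⟨r, hr, σ, hbody, rfl⟩

theorem ruleClosed_model_of_iter_eq {k : ℕ} (hfix : iter P I k = model P I) :
    ruleClosed P (model P I) := by
  rw [ruleClosed_iff_consequences_subset]
  calc consequences P (model P I)
      = consequences P (iter P I k) := by rw [hfix]
    _ ⊆ iter P I (k + 1) := Set.subset_union_right
    _ ⊆ model P I := Set.subset_iUnion (iter P I) (k + 1)

theorem kRewrite_idbPart_iff_sat (P : Program Preds Vars Vals ar) (J : Interp Preds Vals ar)
    (φ : GForm Preds Vals ar) : kRewrite P J (idbPart P J) φ ↔ sat J φ := by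
  induction φ with
  | pos a => exact (mem_iff_mem_idbPart_or_edb_mem rfl).symm
  | neg a => exact Iff.rfl
  | conj φ ψ ihφ ihψ => exact and_congr ihφ ihψ
  | disj φ ψ ihφ ihψ => exact or_congr ihφ ihψ

end

/-- completeness of bounded unrolling. -/
theorem statement11 (P : Program Preds Vars Vals ar) (hP : semiPositive P)
    (I : Interp Preds Vals ar) (hI : isInput P I)
    (k : ℕ) (hk : 1 ≤ k) (hfix : iter P I k = model P I) :
    derivFamily P (model P I) k (fun i => { a ∈ iter P I i | isIDB P a.pred }) ∧
    ruleClosed P (model P I) ∧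
    inp P (model P I) = I ∧
    (∀ φ : GForm Preds Vals ar, sat (model P I) φ →
      kRewrite P (model P I) { a ∈ iter P I k | isIDB P a.pred } φ) := by
  refine ⟨derivFamily_idbPart_iter hP hI k, ruleClosed_model_of_iter_eq hfix,
    (inp_model P I).trans (inp_eq_self_of_isInput hI), fun φ hφ => ?_⟩
  rw [hfix]
  exact (kRewrite_idbPart_iff_sat P (model P I) φ).mpr hφ

end Datalog
end
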